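/- Let G be a discrete reachability bidding game with advantage-based tie-breaking and let c = ⟨v, B1, B2, 2⟩ be a configuration in which Player 2 holds the advantage. Then for every i with 1 ≤ i ≤ min(B1, B2): (i) if M_c(i−1, i) = 1 and M_c(i, i−1) = 1, then M_c(i, i) = 1; (ii) if M_c(i, i−1) = 2, then M_c(i, i) = 2. -/

import Mathlib

/-!
The only configuration reached from the tie `(i, i)` that differs from those reached from the
bids `(i, i - 1)` and `(i - 1, i)` is the one where Player 2 wins the tie: the budgets are as after
`(i - 1, i)`, but the advantage has passed to Player 1.  If Player 2 lets Player 1 win the tie, he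
keeps the advantage and the outcome is that of `(i, i - 1)`; this already gives (ii).  Hence (i)
amounts to the fact that holding the advantage never hurts Player 1 (`wins_of_wins_flip`).

The latter holds by simulation, for any objective.  Let `σ` win when Player 2 holds the advantage.
When Player 1 holds it instead, he follows `σ` as if Player 2 held it, and at the first tie lets
Player 2 win.  He then keeps the advantage, and the configuration is exactly the one `σ` would face
had Player 2 used his advantage to win that tie; from then on Player 1 plays `σ` verbatim.  To
formalise this, histories are relabelled up to and including the first tie (`relabel`), which
translates the strategies of both players between the two plays.
-/


/-! # Discrete bidding games -/

namespace Bid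

/-- A tie-breaking mechanism with a set `S` of states.  When a tie occurs in
state `s`, Player `chooser s` selects the winner of the bidding from the
nonempty set `opts s` (a deterministic mechanism has a singleton `opts s`, so
the choice is forced).  After each bidding the state is updated by `update`
from the outcome of the bidding: whether a tie occurred, the winner, the
winning bid, and the vertex the winner moved to.  Player 1 is `0 : Fin 2`,
Player 2 is `1 : Fin 2`. -/
structure Mech (V : Type) where
  S : Type
  opts : S → Set (Fin 2)
  opts_nonempty : ∀ s, (opts s).Nonempty
  chooser : S → Fin 2
  update : S → Bool → Fin 2 → ℕ → V → S

/-- A discrete bidding game: a finite directed graph in which every vertex has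
an outgoing edge, a total budget `N`, a tie-breaking mechanism, and an
objective for Player 1 on infinite vertex sequences. -/
structure Game (V : Type) where
  E : V → V → Prop
  succ_exists : ∀ v, ∃ u, E v u
  N : ℕ
  M : Mech V
  obj : (ℕ → V) → Prop

/-- A configuration `⟨v, B1, B2, s⟩`: token position, budgets, mechanism state. -/
structure Conf (V S : Type) where
  v : V
  B1 : ℕ
  B2 : ℕ
  s : S

/-- A round of the game, as recorded in histories: the configuration and the
two bids. -/
abbrev Round (V S : Type) := Conf V S × ℕ × ℕ

abbrev Hist (V S : Type) := List (Round V S)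

/-- A (pure) strategy: a bid for each history and current configuration, a
choice of bidding winner upon a tie (used when this player is the mechanism's
chooser), and a choice of successor vertex upon winning a bidding. -/
structure Strat (V : Type) (M : Mech V) where
  bid : Hist V M.S → Conf V M.S → ℕ
  choice : Hist V M.S → Conf V M.S → ℕ → Fin 2
  move : Hist V M.S → Conf V M.S → ℕ → ℕ → V

def budget {V S : Type} (i : Fin 2) (c : Conf V S) : ℕ :=
  if i = 0 then c.B1 else c.B2

/-- Legality of a strategy for Player `i`: bids never exceed the available
budget, tie choices are members of the mechanism's option set, and moves
follow edges of the graph. -/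
def Legal {V : Type} (G : Game V) (i : Fin 2) (σ : Strat V G.M) : Prop :=
  (∀ h c, σ.bid h c ≤ budget i c) ∧
  (∀ h c b, σ.choice h c b ∈ G.M.opts c.s) ∧
  (∀ h c b1 b2, G.E c.v (σ.move h c b1 b2))

/-- The configuration after a bidding at `c` with bids `b1, b2`, tie flag
`tie`, bidding winner `w` and destination `d`: the winner pays his bid to the
loser, the token moves to `d`, and the mechanism state is updated. -/
def nextConf {V : Type} (G : Game V) (c : Conf V G.M.S) (b1 b2 : ℕ) (tie : Bool)
    (w : Fin 2) (d : V) : Conf V G.M.S :=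
  { v := d
    B1 := if w = 0 then c.B1 - b1 else c.B1 + b2
    B2 := if w = 0 then c.B2 + b1 else c.B2 - b2
    s := G.M.update c.s tie w (if w = 0 then b1 else b2) d }

/-- One round of the play of two strategies. -/
def stepPlay {V : Type} (G : Game V) (σ1 σ2 : Strat V G.M)
    (p : Hist V G.M.S × Conf V G.M.S) : Hist V G.M.S × Conf V G.M.S :=
  let h := p.1
  let c := p.2
  let b1 := σ1.bid h c
  let b2 := σ2.bid h c
  let w : Fin 2 :=
    if b2 < b1 then 0
    else if b1 < b2 then 1
    else if G.M.chooser c.s = 0 then σ1.choice h c b1 else σ2.choice h c b1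
  let d := if w = 0 then σ1.move h c b1 b2 else σ2.move h c b1 b2
  (h ++ [(c, b1, b2)], nextConf G c b1 b2 (decide (b1 = b2)) w d)

def playAux {V : Type} (G : Game V) (σ1 σ2 : Strat V G.M) (c0 : Conf V G.M.S) :
    ℕ → Hist V G.M.S × Conf V G.M.S
  | 0 => ([], c0)
  | n + 1 => stepPlay G σ1 σ2 (playAux G σ1 σ2 c0 n)

/-- The vertex path of the play of `σ1` against `σ2` from `c0`. -/
def path {V : Type} (G : Game V) (σ1 σ2 : Strat V G.M) (c0 : Conf V G.M.S) (n : ℕ) : V :=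
  (playAux G σ1 σ2 c0 n).2.v

/-- `σ` is a winning strategy for Player `i` at the configuration `c`. -/
def WinStrat {V : Type} (G : Game V) (i : Fin 2) (σ : Strat V G.M)
    (c : Conf V G.M.S) : Prop :=
  Legal G i σ ∧ ∀ τ : Strat V G.M, Legal G (1 - i) τ →
    (if i = 0 then G.obj (path G σ τ c) else ¬ G.obj (path G τ σ c))

/-- Player `i` has a winning strategy from configuration `c`. -/
def HasWin {V : Type} (G : Game V) (i : Fin 2) (c : Conf V G.M.S) : Prop :=
  ∃ σ, WinStrat G i σ c

/-! ## The turn-based game `G_1` in which Player 1 reveals his bid first. -/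

/-- A Player 2 strategy in `G_1`: its bid may additionally depend on the bid
just revealed by Player 1. -/
structure RespStrat (V : Type) (M : Mech V) where
  bid : Hist V M.S → Conf V M.S → ℕ → ℕ
  choice : Hist V M.S → Conf V M.S → ℕ → Fin 2
  move : Hist V M.S → Conf V M.S → ℕ → ℕ → V

def RespLegal {V : Type} (G : Game V) (τ : RespStrat V G.M) : Prop :=
  (∀ h c b1, τ.bid h c b1 ≤ c.B2) ∧
  (∀ h c b, τ.choice h c b ∈ G.M.opts c.s) ∧
  (∀ h c b1 b2, G.E c.v (τ.move h c b1 b2))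

def stepPlayFirst {V : Type} (G : Game V) (σ : Strat V G.M) (τ : RespStrat V G.M)
    (p : Hist V G.M.S × Conf V G.M.S) : Hist V G.M.S × Conf V G.M.S :=
  let h := p.1
  let c := p.2
  let b1 := σ.bid h c
  let b2 := τ.bid h c b1
  let w : Fin 2 :=
    if b2 < b1 then 0
    else if b1 < b2 then 1
    else if G.M.chooser c.s = 0 then σ.choice h c b1 else τ.choice h c b1
  let d := if w = 0 then σ.move h c b1 b2 else τ.move h c b1 b2
  (h ++ [(c, b1, b2)], nextConf G c b1 b2 (decide (b1 = b2)) w d)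

def playFirstAux {V : Type} (G : Game V) (σ : Strat V G.M) (τ : RespStrat V G.M)
    (c0 : Conf V G.M.S) : ℕ → Hist V G.M.S × Conf V G.M.S
  | 0 => ([], c0)
  | n + 1 => stepPlayFirst G σ τ (playFirstAux G σ τ c0 n)

def pathFirst {V : Type} (G : Game V) (σ : Strat V G.M) (τ : RespStrat V G.M)
    (c0 : Conf V G.M.S) (n : ℕ) : V :=
  (playFirstAux G σ τ c0 n).2.v

/-- Player 1 has a winning strategy from configuration `c` in the turn-based
game `G_1` in which he reveals his bid before Player 2. -/
def P1WinsFirst {V : Type} (G : Game V) (c : Conf V G.M.S) : Prop :=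
  ∃ σ : Strat V G.M, Legal G 0 σ ∧
    ∀ τ : RespStrat V G.M, RespLegal G τ → G.obj (pathFirst G σ τ c)

/-! ## The bidding matrix -/

/-- The position of `G_1` reached from `c` after bids `b1, b2` with bidding
winner `w` is winning for Player 1: if Player 1 won the bidding he can choose a
successor leading to a configuration from which he wins `G_1`, and if Player 2
won the bidding then every successor he may choose leads to such a
configuration. -/
def AfterWin {V : Type} (G : Game V) (c : Conf V G.M.S) (b1 b2 : ℕ) (tie : Bool)
    (w : Fin 2) : Prop :=
  if w = 0 then ∃ d, G.E c.v d ∧ P1WinsFirst G (nextConf G c b1 b2 tie w d)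
  else ∀ d, G.E c.v d → P1WinsFirst G (nextConf G c b1 b2 tie w d)

/-- The position of `G_1` reached from `c` after the bids `b1, b2` — just
before the bidding winner chooses a successor vertex and, on a tie, before the
mechanism's chooser decides who wins the bidding — is winning for Player 1. -/
def PosWin1 {V : Type} (G : Game V) (c : Conf V G.M.S) (b1 b2 : ℕ) : Prop :=
  if b1 = b2 then
    if G.M.chooser c.s = 0 then ∃ w ∈ G.M.opts c.s, AfterWin G c b1 b2 true w
    else ∀ w ∈ G.M.opts c.s, AfterWin G c b1 b2 true w
  else AfterWin G c b1 b2 false (if b2 < b1 then 0 else 1)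

open Classical in
/-- The bidding matrix of the configuration `c`: `Mc G c b1 b2 = 1` if the
position of `G_1` reached from `c` after the bids `b1, b2` is winning for
Player 1 in `G_1`, and `= 2` otherwise. -/
noncomputable def Mc {V : Type} (G : Game V) (c : Conf V G.M.S) (b1 b2 : ℕ) : ℕ :=
  if PosWin1 G c b1 b2 then 1 else 2

/-! ## Particular tie-breaking mechanisms -/

/-- A general tie-breaking transducer: its state is updated from the letter
describing the outcome of a bidding (vertex moved to, winner, whether a tie
occurred, winning bid), and on a tie in state `q` Player `Γ q` wins. -/
structure TieTransducer (V : Type) where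
  Q : Type
  q0 : Q
  δ : Q → V → Fin 2 → Bool → ℕ → Q
  Γ : Q → Fin 2

/-- The mechanism of a tie-breaking transducer. -/
def TieTransducer.mech {V : Type} (T : TieTransducer V) : Mech V where
  S := T.Q
  opts := fun q => {T.Γ q}
  opts_nonempty := fun q => ⟨T.Γ q, rfl⟩
  chooser := fun q => T.Γ q
  update := fun q tie w b d => T.δ q d w tie b

/-- A tie-breaking transducer that is un-aware of ties: its input letters
record only the vertex moved to, the winner, and the winning bid. -/
structure TieTransducerUA (V : Type) where
  Q : Type
  q0 : Q
  δ : Q → V → Fin 2 → ℕ → Q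
  Γ : Q → Fin 2

/-- The mechanism of a tie-breaking transducer that is un-aware of ties. -/
def TieTransducerUA.mech {V : Type} (T : TieTransducerUA V) : Mech V where
  S := T.Q
  opts := fun q => {T.Γ q}
  opts_nonempty := fun q => ⟨T.Γ q, rfl⟩
  chooser := fun q => T.Γ q
  update := fun q _tie w b d => T.δ q d w b

/-- Advantage-based tie-breaking: the state records the advantage holder; on a
tie the holder chooses the winner; if he chooses himself the advantage passes
to the opponent, otherwise he keeps it; non-tied biddings leave the state
unchanged. -/
def advMech (V : Type) : Mech V where
  S := Fin 2
  opts := fun _ => Set.univ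
  opts_nonempty := fun _ => ⟨0, Set.mem_univ 0⟩
  chooser := fun s => s
  update := fun s tie w _ _ => if tie then (if w = s then 1 - s else s) else s

/-- Alternating tie-breaking: the state records the advantage holder; on a tie
the holder wins the bidding and the advantage passes to the other player;
non-tied biddings leave the state unchanged. -/
def altMech (V : Type) : Mech V where
  S := Fin 2
  opts := fun s => {s}
  opts_nonempty := fun s => ⟨s, rfl⟩
  chooser := fun s => s
  update := fun s tie _ _ _ => if tie then 1 - s else s

end Bid

namespace Bid

/-- The game with advantage-based tie-breaking and an arbitrary objective. -/
abbrev advGame {V : Type} (E : V → V → Prop) (hs : ∀ v, ∃ u, E v u) (N : ℕ)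
    (obj : (ℕ → V) → Prop) : Game V := ⟨E, hs, N, advMech V, obj⟩

/-- Some round of the history ended in a tie. -/
def HasTie {V : Type} (h : Hist V (Fin 2)) : Prop := ∃ r ∈ h, r.2.1 = r.2.2

/-- The configuration `c` with advantage state `s`. -/
def setAdv {V : Type} (s : Fin 2) (c : Conf V (Fin 2)) : Conf V (Fin 2) := ⟨c.v, c.B1, c.B2, s⟩

open Classical in
/-- The configuration reached after `h`, with its advantage state replaced by `s` as long as no tie
has occurred. -/
noncomputable def relabelConf {V : Type} (s : Fin 2) (h : Hist V (Fin 2)) (c : Conf V (Fin 2)) :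
    Conf V (Fin 2) := if HasTie h then c else setAdv s c

/-- The history with the advantage state replaced by `s` in every round up to and including the
first tie. -/
def relabel {V : Type} (s : Fin 2) : Hist V (Fin 2) → Hist V (Fin 2)
  | [] => []
  | r :: h => (setAdv s r.1, r.2) :: if r.2.1 = r.2.2 then h else relabel s h

theorem hasTie_cons {V : Type} (r : Round V (Fin 2)) (h : Hist V (Fin 2)) :
    HasTie (r :: h) ↔ r.2.1 = r.2.2 ∨ HasTie h := by
  simp [HasTie]

theorem hasTie_append {V : Type} (h : Hist V (Fin 2)) (r : Round V (Fin 2)) :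
    HasTie (h ++ [r]) ↔ HasTie h ∨ r.2.1 = r.2.2 := by
  simp [HasTie, or_and_right, exists_or]

theorem relabelConf_pos {V : Type} (s : Fin 2) {h : Hist V (Fin 2)} (c : Conf V (Fin 2))
    (hT : HasTie h) : relabelConf s h c = c := if_pos hT

theorem relabelConf_neg {V : Type} (s : Fin 2) {h : Hist V (Fin 2)} (c : Conf V (Fin 2))
    (hT : ¬ HasTie h) : relabelConf s h c = setAdv s c := if_neg hT

theorem relabel_append {V : Type} (s : Fin 2) (h : Hist V (Fin 2)) (r : Round V (Fin 2)) :
    relabel s (h ++ [r]) = relabel s h ++ [(relabelConf s h r.1, r.2)] := by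
  induction h with
  | nil => simp [relabel, relabelConf, HasTie]
  | cons a h ih =>
    by_cases ha : a.2.1 = a.2.2
    · simp [relabel, relabelConf_pos s r.1 ((hasTie_cons a h).2 (.inl ha)), ha]
    · have hcons : HasTie (a :: h) ↔ HasTie h := by simp [hasTie_cons, ha]
      by_cases hT : HasTie h
      · simp [relabel, ha, ih, relabelConf_pos s r.1 hT, relabelConf_pos s r.1 (hcons.2 hT)]
      · simp [relabel, ha, ih, relabelConf_neg s r.1 hT,
          relabelConf_neg s r.1 (fun h => hT (hcons.1 h))]

theorem relabelConf_v {V : Type} (s : Fin 2) (h : Hist V (Fin 2)) (c : Conf V (Fin 2)) :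
    (relabelConf s h c).v = c.v := by
  unfold relabelConf setAdv; split_ifs <;> rfl

theorem relabelConf_B1 {V : Type} (s : Fin 2) (h : Hist V (Fin 2)) (c : Conf V (Fin 2)) :
    (relabelConf s h c).B1 = c.B1 := by
  unfold relabelConf setAdv; split_ifs <;> rfl

theorem relabelConf_B2 {V : Type} (s : Fin 2) (h : Hist V (Fin 2)) (c : Conf V (Fin 2)) :
    (relabelConf s h c).B2 = c.B2 := by
  unfold relabelConf setAdv; split_ifs <;> rfl

open Classical in
/-- Player 1's simulating strategy: play `σ` on the relabelled history, in which Player 2 holds the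
advantage until the first tie, and let Player 2 win the first tie. -/
noncomputable def simStrat {V : Type} (σ : Strat V (advMech V)) : Strat V (advMech V) where
  bid h c := σ.bid (relabel 1 h) (relabelConf 1 h c)
  choice h c b := if HasTie h then σ.choice (relabel 1 h) (relabelConf 1 h c) b else (1 : Fin 2)
  move h c b1 b2 := σ.move (relabel 1 h) (relabelConf 1 h c) b1 b2

open Classical in
/-- The response in the simulated play corresponding to the response `τ` in the real play: Player 2
uses his advantage to win the first tie. -/
noncomputable def simResp {V : Type} (τ : RespStrat V (advMech V)) : RespStrat V (advMech V) where
  bid h c b := τ.bid (relabel 0 h) (relabelConf 0 h c) b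
  choice h c b := if HasTie h then τ.choice (relabel 0 h) (relabelConf 0 h c) b else (1 : Fin 2)
  move h c b1 b2 := τ.move (relabel 0 h) (relabelConf 0 h c) b1 b2

/-- The correspondence between a real position `p` (Player 1 started with the advantage) and a
simulated position `q` (Player 2 started with it). -/
structure Sim {V : Type} (p q : Hist V (Fin 2) × Conf V (Fin 2)) : Prop where
  tie : HasTie q.1 ↔ HasTie p.1
  hist : q.1 = relabel 1 p.1
  hist' : p.1 = relabel 0 q.1
  conf : q.2 = relabelConf 1 p.1 p.2
  conf' : p.2 = relabelConf 0 q.1 q.2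

/-- After another round with the same bids, positions still correspond if the new configurations
agree when a tie has occurred, and otherwise differ by the advantage only. -/
theorem Sim.extend {V : Type} {h h' : Hist V (Fin 2)} {c c' d d' : Conf V (Fin 2)}
    (hpq : Sim (h, c) (h', c')) (b1 b2 : ℕ)
    (htie : HasTie h ∨ b1 = b2 → d' = d)
    (hno : ¬ HasTie h → b1 ≠ b2 → d' = setAdv 1 d ∧ d = setAdv 0 d') :
    Sim (h ++ [(c, b1, b2)], d) (h' ++ [(c', b1, b2)], d') := by
  obtain ⟨ht, e1, e2, e3, e4⟩ := hpq
  dsimp only at ht e1 e2 e3 e4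
  have hT : HasTie (h ++ [(c, b1, b2)]) ↔ HasTie h ∨ b1 = b2 := hasTie_append _ _
  have hT' : HasTie (h' ++ [(c', b1, b2)]) ↔ HasTie h ∨ b1 = b2 := by
    rw [hasTie_append, ht]
  refine ⟨hT'.trans hT.symm, ?_, ?_, ?_, ?_⟩
  · simp only [relabel_append, ← e1, ← e3]
  · simp only [relabel_append, ← e2, ← e4]
  · by_cases hc : HasTie h ∨ b1 = b2
    · exact (htie hc).trans (relabelConf_pos 1 d (hT.2 hc)).symm
    · obtain ⟨hc1, hc2⟩ := not_or.1 hc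
      exact (hno hc1 hc2).1.trans (relabelConf_neg 1 d (fun h => hc (hT.1 h))).symm
  · by_cases hc : HasTie h ∨ b1 = b2
    · exact (htie hc).symm.trans (relabelConf_pos 0 d' (hT'.2 hc)).symm
    · obtain ⟨hc1, hc2⟩ := not_or.1 hc
      exact (hno hc1 hc2).2.trans (relabelConf_neg 0 d' (fun h => hc (hT'.1 h))).symm

open Classical in
/-- One round preserves the correspondence: at the first tie Player 2 wins in both plays, and Player 1
ends up with the advantage in both. -/
theorem Sim.step {V : Type} {E : V → V → Prop} {hs : ∀ v, ∃ u, E v u} {N : ℕ}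
    {obj : (ℕ → V) → Prop} (σ : Strat V (advMech V)) (τ : RespStrat V (advMech V))
    {p q : Hist V (Fin 2) × Conf V (Fin 2)} (hpq : Sim p q) :
    Sim (stepPlayFirst (advGame E hs N obj) (simStrat σ) τ p)
      (stepPlayFirst (advGame E hs N obj) σ (simResp τ) q) := by
  obtain ⟨h, c⟩ := p
  obtain ⟨h', c'⟩ := q
  have hsim := hpq
  obtain ⟨ht, e1, e2, e3, e4⟩ := hpq
  dsimp only at ht e1 e2 e3 e4
  -- Relabelling translates back and forth, so bids and moves coincide in the two plays; tie choices
  -- come from the original strategies after the first tie, and favour Player 2 at it.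
  have hb1 : (simStrat σ).bid h c = σ.bid h' c' := by simp only [simStrat, ← e1, ← e3]
  have hb2 : ∀ b, (simResp τ).bid h' c' b = τ.bid h c b := by
    intro b; simp only [simResp, ← e2, ← e4]
  have hm1 : ∀ b b', (simStrat σ).move h c b b' = σ.move h' c' b b' := by
    intro b b'; simp only [simStrat, ← e1, ← e3]
  have hm2 : ∀ b b', (simResp τ).move h' c' b b' = τ.move h c b b' := by
    intro b b'; simp only [simResp, ← e2, ← e4]
  have hc1 : ∀ b, (simStrat σ).choice h c b = if HasTie h then σ.choice h' c' b else 1 := by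
    intro b; simp only [simStrat, ← e1, ← e3]
  have hc2 : ∀ b, (simResp τ).choice h' c' b = if HasTie h then τ.choice h c b else 1 := by
    intro b; simp only [simResp, ← e2, ← e4, ht]
  simp only [stepPlayFirst, hb1, hb2, hm1, hm2, hc1, hc2]
  generalize σ.bid h' c' = b1
  generalize τ.bid h c b1 = b2
  have hB1 : c'.B1 = c.B1 := by rw [e3, relabelConf_B1]
  have hB2 : c'.B2 = c.B2 := by rw [e3, relabelConf_B2]
  refine hsim.extend b1 b2 (fun hc => ?_) (fun hT hne => ?_)
  · by_cases hT : HasTie h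
    · have hcc : c' = c := by simpa [relabelConf, hT] using e3
      subst hcc
      simp only [hT, if_true]
      rfl
    · obtain rfl : b1 = b2 := hc.resolve_left hT
      have hs' : c'.s = (1 : Fin 2) := by rw [e3]; simp [relabelConf, hT, setAdv]
      have hs0 : c.s = (0 : Fin 2) := by rw [e4]; simp [relabelConf, ht, hT, setAdv]
      simp [nextConf, advMech, hT, hs', hs0, hB1, hB2]
  · have hs' : c'.s = (1 : Fin 2) := by rw [e3]; simp [relabelConf, hT, setAdv]
    have hs0 : c.s = (0 : Fin 2) := by rw [e4]; simp [relabelConf, ht, hT, setAdv]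
    rcases lt_or_gt_of_ne hne with hlt | hgt
    · simp [nextConf, advMech, setAdv, hs', hs0, hB1, hB2, hlt, hlt.not_gt, hne]
    · simp [nextConf, advMech, setAdv, hs', hs0, hB1, hB2, hgt, hne]

/-- Holding the advantage never hurts Player 1. -/
theorem wins_of_wins_flip {V : Type} {E : V → V → Prop} {hs : ∀ v, ∃ u, E v u} {N : ℕ}
    {obj : (ℕ → V) → Prop} (v : V) (B1 B2 : ℕ)
    (H : P1WinsFirst (advGame E hs N obj) (⟨v, B1, B2, (1 : Fin 2)⟩ : Conf V (Fin 2))) :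
    P1WinsFirst (advGame E hs N obj) (⟨v, B1, B2, (0 : Fin 2)⟩ : Conf V (Fin 2)) := by
  obtain ⟨σ, ⟨hbid, -, hmove⟩, hwin⟩ := H
  refine ⟨simStrat σ, ⟨fun h c => ?_, fun _ _ _ => Set.mem_univ _, fun h c b1 b2 => ?_⟩,
    fun τ hτ => ?_⟩
  · exact (hbid (relabel 1 h) (relabelConf 1 h c)).trans_eq (relabelConf_B1 1 h c)
  · have := hmove (relabel 1 h) (relabelConf 1 h c) b1 b2
    exact relabelConf_v 1 h c ▸ this
  · have hlegal : RespLegal (advGame E hs N obj) (simResp τ) := by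
      refine ⟨fun h c b => ?_, fun _ _ _ => Set.mem_univ _, fun h c b1 b2 => ?_⟩
      · exact (hτ.1 (relabel 0 h) (relabelConf 0 h c) b).trans_eq (relabelConf_B2 0 h c)
      · have := hτ.2.2 (relabel 0 h) (relabelConf 0 h c) b1 b2
        exact relabelConf_v 0 h c ▸ this
    have hsim : ∀ n,
        Sim (playFirstAux (advGame E hs N obj) (simStrat σ) τ
            (⟨v, B1, B2, (0 : Fin 2)⟩ : Conf V (Fin 2)) n)
          (playFirstAux (advGame E hs N obj) σ (simResp τ)
            (⟨v, B1, B2, (1 : Fin 2)⟩ : Conf V (Fin 2)) n) := by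
      intro n
      induction n with
      | zero =>
        have h0 : ¬ HasTie ([] : Hist V (Fin 2)) := by simp [HasTie]
        exact ⟨Iff.rfl, rfl, rfl, (relabelConf_neg 1 ⟨v, B1, B2, 0⟩ h0).symm,
          (relabelConf_neg 0 ⟨v, B1, B2, 1⟩ h0).symm⟩
      | succ n ih => exact ih.step σ τ
    have hpath := hwin _ hlegal
    convert hpath using 1
    funext n
    change _ = (playFirstAux _ _ _ _ n).2.v
    rw [(hsim n).conf, relabelConf_v]
    rfl

theorem Mc_eq_one {V : Type} (G : Game V) (c : Conf V G.M.S) (b1 b2 : ℕ) :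
    Mc G c b1 b2 = 1 ↔ PosWin1 G c b1 b2 := by
  unfold Mc; split_ifs with h <;> simp [h]

theorem Mc_eq_two {V : Type} (G : Game V) (c : Conf V G.M.S) (b1 b2 : ℕ) :
    Mc G c b1 b2 = 2 ↔ ¬ PosWin1 G c b1 b2 := by
  unfold Mc; split_ifs with h <;> simp [h]

end Bid

open Bid in
/-- In a discrete reachability bidding game with
advantage-based tie-breaking, for a configuration `c` in which Player 2 holds
the advantage (`c.s = 1`), for every `i` with `1 ≤ i ≤ min(B1,B2)`:
(i) if `M_c(i-1,i) = 1` and `M_c(i,i-1) = 1`, then `M_c(i,i) = 1`; and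
(ii) if `M_c(i,i-1) = 2` then `M_c(i,i) = 2`. -/
theorem stmt_17 {V : Type} [Fintype V] (E : V → V → Prop)
    (hsucc : ∀ v, ∃ u, E v u) (N : ℕ) (T : Set V) :
    let G : Game V := ⟨E, hsucc, N, advMech V, fun p => ∃ n, p n ∈ T⟩
    ∀ c : Conf V (Fin 2), c.B1 + c.B2 = N → c.s = 1 →
      ∀ i : ℕ, 1 ≤ i → i ≤ min c.B1 c.B2 →
        (Mc G c (i - 1) i = 1 → Mc G c i (i - 1) = 1 → Mc G c i i = 1) ∧
        (Mc G c i (i - 1) = 2 → Mc G c i i = 2) := by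
  intro G c _ hs i hi _
  obtain ⟨v, B1, B2, s⟩ := c
  dsimp only at hs
  subst hs
  have hne : i ≠ i - 1 := by omega
  have hlt : i - 1 < i := by omega
  -- On a tie, letting Player 1 win leads to the same configurations as the bids `(i, i - 1)`.
  have hlow : PosWin1 G ⟨v, B1, B2, (1 : Fin 2)⟩ i (i - 1) ↔
      AfterWin G ⟨v, B1, B2, (1 : Fin 2)⟩ i i true 0 := by
    simp [PosWin1, hne, hlt, AfterWin, nextConf, G, advMech]
  have htie : PosWin1 G ⟨v, B1, B2, (1 : Fin 2)⟩ i i ↔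
      AfterWin G ⟨v, B1, B2, (1 : Fin 2)⟩ i i true 0 ∧
      AfterWin G ⟨v, B1, B2, (1 : Fin 2)⟩ i i true 1 := by
    simp [PosWin1, G, advMech, Fin.forall_fin_two]
  refine ⟨fun h1 h2 => (Mc_eq_one ..).2 (htie.2 ⟨hlow.1 ((Mc_eq_one ..).1 h2), ?_⟩),
    fun h1 => (Mc_eq_two ..).2 fun h2 => (Mc_eq_two ..).1 h1 (hlow.2 (htie.1 h2).1)⟩
  replace h1 := (Mc_eq_one ..).1 h1
  have h1' : ∀ d, E v d → P1WinsFirst G ⟨d, B1 + i, B2 - i, (1 : Fin 2)⟩ := by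
    simpa [PosWin1, hne.symm, hlt.not_gt, AfterWin, nextConf, G, advMech] using h1
  intro d hd
  exact wins_of_wins_flip d (B1 + i) (B2 - i) (h1' d hd)
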